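/- Fix Δt > 0, τ > 0, horizon H ≥ 1, bounds a_max > 0 and v_min ≤ v_max, and desired spacing offset d̃ = (d_des, 0) ∈ ℝ². Let A = [[1, Δt],[0, 1 − Δt/τ]] and B = (0, Δt/τ)ᵀ. Suppose (x^p(0..H), u^p(0..H−1)) is feasible for the DMPC problem of vehicle i at time t, i.e., it satisfies: x^p(k+1) = A x^p(k) + B u^p(k) for k = 0,...,H−1; |v^p(k+1) − v^p(k)| ≤ Δt·a_max for k = 0,...,H−1; v_min ≤ v^p(k) ≤ v_max for k = 0,...,H (where v^p denotes the second component of x^p); x^p(H) = x_{i−1}^a(H) − d̃; and u^p(H−1) = v_{i−1}^a(H), where x_{i−1}^a(0..H) is the predecessor's assumed trajectory and v_{i−1}^a its velocity component. Assume v_min ≤ v_{i−1}^a(H) ≤ v_max. Define the shifted candidate for time t+1 by x̂(k) = x^p(k+1) for k = 0,...,H−1, x̂(H) = A x^p(H) + B v_{i−1}^a(H), û(k) = u^p(k+1) for k = 0,...,H−2, û(H−1) = v_{i−1}^a(H), and define the predecessor's updated assumed trajectory by x̂_{i−1}^a(k) = x_{i−1}^a(k+1) for k = 0,...,H−1 and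 x̂_{i−1}^a(H) = A x_{i−1}^a(H) + B v_{i−1}^a(H). Then (x̂, û) is feasible for vehicle i's DMPC problem at time t+1 with initial state x̂(0) and predecessor assumed trajectory x̂_{i−1}^a; in particular x̂(H) = x̂_{i−1}^a(H) − d̃, û(H−1) equals the terminal velocity of x̂_{i−1}^a, the appended step has zero velocity change, and all dynamics, acceleration, and velocity constraints hold. -/

import Mathlib

/-!
The terminal constraints force the last predicted velocity to equal the last input, since
`d̃` has no velocity component: `v^p(H) = v_pred^a(H)`. A state whose velocity equals the input
is an equilibrium of the velocity dynamics (`step_vel_self`), so the appended step keeps the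
velocity and therefore satisfies the acceleration and velocity bounds. As the dynamics commute
with position shifts (`step_sub_dtil`), the appended step also preserves the spacing `d̃`
to the predecessor. All other constraints are those of the old trajectory at shifted times.
-/

open Matrix

/-- The vehicle longitudinal dynamics map: `x(k+1) = A x(k) + B u(k)` with state
`x = (p, v)`, `A = [[1, Δt], [0, 1 - Δt/τ]]`, `B = (0, Δt/τ)ᵀ`. -/
noncomputable def step (dt τ : ℝ) (x : Fin 2 → ℝ) (u : ℝ) : Fin 2 → ℝ :=
  (!![1, dt; 0, 1 - dt / τ] : Matrix (Fin 2) (Fin 2) ℝ).mulVec x + u • ![0, dt / τ]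

/-- The desired spacing offset `d̃ = (d_des, 0) ∈ ℝ²`. -/
noncomputable def dtil (d_des : ℝ) : Fin 2 → ℝ := ![d_des, 0]

/-- Feasibility of a predicted trajectory `(x^p(0..H), u^p(0..H-1))` for the
DMPC problem of a vehicle with initial state `x₀` and predecessor assumed
trajectory `xaPred(0..H)`: the initial condition, the dynamics
`x^p(k+1) = A x^p(k) + B u^p(k)`, the acceleration bound
`|v^p(k+1) - v^p(k)| ≤ Δt·a_max`, the velocity bounds `v_min ≤ v^p(k) ≤ v_max`,
and the terminal constraints `x^p(H) = xaPred(H) - d̃` and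
`u^p(H-1) = v_pred^a(H)`. -/
noncomputable def Feasible (dt τ amax vmin vmax d_des : ℝ) (H : ℕ)
    (x0 : Fin 2 → ℝ) (xaPred : ℕ → Fin 2 → ℝ)
    (xp : ℕ → Fin 2 → ℝ) (up : ℕ → ℝ) : Prop :=
  xp 0 = x0 ∧
  (∀ k < H, xp (k + 1) = step dt τ (xp k) (up k)) ∧
  (∀ k < H, |xp (k + 1) 1 - xp k 1| ≤ dt * amax) ∧
  (∀ k ≤ H, vmin ≤ xp k 1 ∧ xp k 1 ≤ vmax) ∧
  xp H = xaPred H - dtil d_des ∧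
  up (H - 1) = xaPred H 1

/-- The one-step time-shift of a predicted state trajectory, extended at the end
by applying the dynamics with the held terminal velocity `v_term`. -/
noncomputable def shiftState (dt τ : ℝ) (H : ℕ) (v_term : ℝ)
    (xp : ℕ → Fin 2 → ℝ) : ℕ → Fin 2 → ℝ :=
  fun k => if k < H then xp (k + 1) else step dt τ (xp H) v_term

/-- The one-step time-shift of a predicted input trajectory, extended at the end
by the held terminal velocity `v_term`. -/
noncomputable def shiftInput (H : ℕ) (v_term : ℝ) (up : ℕ → ℝ) : ℕ → ℝ :=
  fun k => if k < H - 1 then up (k + 1) else v_term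

/-- A vehicle whose commanded velocity is its current velocity keeps that velocity. -/
lemma step_vel_self (dt τ : ℝ) (x : Fin 2 → ℝ) : step dt τ x (x 1) 1 = x 1 := by
  simp [step, dotProduct, Fin.sum_univ_two]
  ring

/-- The dynamics commute with a shift of the position, because `A d̃ = d̃`. -/
lemma step_sub_dtil (dt τ d : ℝ) (x : Fin 2 → ℝ) (u : ℝ) :
    step dt τ (x - dtil d) u = step dt τ x u - dtil d := by
  ext i
  fin_cases i <;> simp [step, dtil, Matrix.vecHead, Matrix.vecTail] <;> ring

/-- **Recursive feasibility of the DMPC terminal constraints.** Fix `Δt > 0`,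
`τ > 0`, horizon `H ≥ 1`, bounds `a_max > 0` and `v_min ≤ v_max`, and desired
spacing `d_des` giving the offset `d̃ = (d_des, 0)`. Suppose
`(x^p(0..H), u^p(0..H-1))` is feasible for the DMPC problem of vehicle `i` at
time `t` with predecessor assumed trajectory `x_pred^a`, and assume
`v_min ≤ v_pred^a(H) ≤ v_max`. Define the shifted candidate
`x̂(k) = x^p(k+1)` for `k = 0, …, H-1`, `x̂(H) = A x^p(H) + B v_pred^a(H)`,
`û(k) = u^p(k+1)` for `k = 0, …, H-2`, `û(H-1) = v_pred^a(H)`, and the updated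
predecessor assumed trajectory `x̂_pred^a(k) = x_pred^a(k+1)` for
`k = 0, …, H-1`, `x̂_pred^a(H) = A x_pred^a(H) + B v_pred^a(H)`. Then `(x̂, û)`
is feasible for the DMPC problem at time `t+1` with initial state `x̂(0)` and
predecessor assumed trajectory `x̂_pred^a`; in particular
`x̂(H) = x̂_pred^a(H) - d̃`, `û(H-1)` equals the terminal velocity of
`x̂_pred^a`, and the appended step has zero velocity change. -/
theorem dmpc_recursive_feasibility
    (H : ℕ) (hH : 1 ≤ H) (dt τ amax vmin vmax d_des : ℝ)
    (hdt : 0 < dt) (hτ : 0 < τ) (hamax : 0 < amax) (hvm : vmin ≤ vmax)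
    (xaPred xp : ℕ → Fin 2 → ℝ) (up : ℕ → ℝ)
    (hfeas : Feasible dt τ amax vmin vmax d_des H (xp 0) xaPred xp up)
    (hvlo : vmin ≤ xaPred H 1) (hvhi : xaPred H 1 ≤ vmax) :
    Feasible dt τ amax vmin vmax d_des H
        (shiftState dt τ H (xaPred H 1) xp 0)
        (shiftState dt τ H (xaPred H 1) xaPred)
        (shiftState dt τ H (xaPred H 1) xp)
        (shiftInput H (xaPred H 1) up) ∧
      shiftState dt τ H (xaPred H 1) xp H 1 =
        shiftState dt τ H (xaPred H 1) xp (H - 1) 1 := by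
  obtain ⟨-, hdyn, hacc, hvel, hterm, -⟩ := hfeas
  -- Writing the horizon as `n + 1` removes the truncated subtraction `H - 1`.
  obtain ⟨n, rfl⟩ : ∃ n, H = n + 1 := ⟨H - 1, by omega⟩
  have hv : xp (n + 1) 1 = xaPred (n + 1) 1 := by
    rw [hterm]
    simp [dtil]
  have hstep : step dt τ (xp (n + 1)) (xaPred (n + 1) 1) 1 = xaPred (n + 1) 1 := by
    rw [← hv, step_vel_self]
  have hlast : ∀ y, shiftState dt τ (n + 1) (xaPred (n + 1) 1) y (n + 1)
      = step dt τ (y (n + 1)) (xaPred (n + 1) 1) := fun y => by simp [shiftState]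
  have hshift : ∀ y, ∀ k ≤ n, shiftState dt τ (n + 1) (xaPred (n + 1) 1) y k = y (k + 1) :=
    fun y k hk => by simp [shiftState, Nat.lt_succ_of_le hk]
  refine ⟨⟨rfl, fun k hk => ?_, fun k hk => ?_, fun k hk => ?_, ?_, ?_⟩, ?_⟩
  · rcases Nat.lt_succ_iff_lt_or_eq.mp hk with h | rfl
    · rw [hshift xp (k + 1) h, hshift xp k h.le, hdyn (k + 1) (by omega)]
      simp [shiftInput, h]
    · rw [hlast, hshift xp k le_rfl]
      simp [shiftInput]
  · rcases Nat.lt_succ_iff_lt_or_eq.mp hk with h | rfl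
    · rw [hshift xp (k + 1) h, hshift xp k h.le]
      exact hacc (k + 1) (by omega)
    · rw [hlast, hshift xp k le_rfl, hstep, hv, sub_self, abs_zero]
      positivity
  · rcases Nat.le_succ_iff.mp hk with h | rfl
    · rw [hshift xp k h]
      exact hvel (k + 1) (by omega)
    · rw [hlast, hstep]
      exact ⟨hvlo, hvhi⟩
  · rw [hlast, hlast, hterm, step_sub_dtil]
  · rw [hlast, step_vel_self]
    simp [shiftInput]
  · rw [hlast, Nat.add_sub_cancel, hshift xp n le_rfl, hstep, hv]
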